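/- Let p_n be the number of king permutations of length n having no strong fixed point, and P(t) = Σ_{n≥0} p_n t^n. Then (1 + t + t·A(t))·P(t) = (1+t)·A(t) as formal power series over ℚ. -/

import Mathlib

/-- A permutation of `{0, …, n-1}` is a *king permutation* if consecutive entries
differ by more than 1 in absolute value. -/
def IsKing {n : ℕ} (σ : Equiv.Perm (Fin n)) : Prop :=
  ∀ i : Fin n, ∀ h : (i : ℕ) + 1 < n,
    1 < |((σ ⟨(i : ℕ) + 1, h⟩ : ℕ) : ℤ) - ((σ i : ℕ) : ℤ)|

/-- `kingCount n = A_n`, the number of king permutations of length `n`. -/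
noncomputable def kingCount (n : ℕ) : ℕ :=
  Nat.card {σ : Equiv.Perm (Fin n) // IsKing σ}

/-- `A(t) = Σ_{n≥0} A_n t^n` as a formal power series over `ℚ`. -/
noncomputable def kingA : PowerSeries ℚ :=
  PowerSeries.mk fun n => (kingCount n : ℚ)

/-- `i` is a *strong fixed point* of `σ`: all earlier entries are smaller and all
later entries are larger. -/
def IsStrongFixedPoint {n : ℕ} (σ : Equiv.Perm (Fin n)) (i : Fin n) : Prop :=
  (∀ j : Fin n, j < i → σ j < σ i) ∧ (∀ j : Fin n, i < j → σ i < σ j)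

/-- `Pcount n = p_n`, the number of king permutations of length `n` having no
strong fixed point. -/
noncomputable def Pcount (n : ℕ) : ℕ :=
  Nat.card {σ : Equiv.Perm (Fin n) //
    IsKing σ ∧ ∀ i : Fin n, ¬ IsStrongFixedPoint σ i}

/-- `P(t) = Σ_{n≥0} p_n t^n` as a formal power series over `ℚ`. -/
noncomputable def kingP : PowerSeries ℚ :=
  PowerSeries.mk fun n => (Pcount n : ℚ)

/-!
Write `σ = α ⊕ 1 ⊕ β`, where the middle block is a strong fixed point of `σ`. It is the first one
iff `α` has none, and then `α` does not end with its maximum, so `σ` is king iff `α` and `β` are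
king and `β` does not start with its minimum. Let `B(t)` count the king permutations not starting
with their minimum. Splitting at the first strong fixed point gives `A = P + t P B`; splitting off
an initial minimum (the case of empty `α`) gives `A = (1 + t) B`. Eliminating `B` gives the
identity.
-/

open Equiv (Perm)

theorem card_subtype_eq_card_empty_add_sum_card_isLeast {X ι : Type*} [Finite X] [LinearOrder ι]
    [Fintype ι] (p : X → Prop) (S : X → Set ι) :
    Nat.card {x // p x} =
      Nat.card {x // p x ∧ S x = ∅} + ∑ i, Nat.card {x // p x ∧ IsLeast (S x) i} := by
  rw [← Nat.card_sigma, ← Nat.card_sum]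
  symm
  refine Nat.card_congr (Equiv.ofBijective
    (Sum.elim (fun x ↦ ⟨x, x.2.1⟩) fun x ↦ ⟨x.2, x.2.2.1⟩) ⟨?_, ?_⟩)
  · rintro (⟨x, _, hx⟩ | ⟨i, x, _, hx⟩) (⟨y, _, hy⟩ | ⟨j, y, _, hy⟩) hxy <;>
      obtain rfl : x = y := congrArg Subtype.val hxy
    · rfl
    · exact absurd hx hy.nonempty.ne_empty
    · exact absurd hy hx.nonempty.ne_empty
    · obtain rfl := hx.unique hy
      rfl
  · rintro ⟨x, hx⟩
    rcases (S x).eq_empty_or_nonempty with hS | hS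
    · exact ⟨.inl ⟨x, hx, hS⟩, rfl⟩
    · obtain ⟨i, hi, hmin⟩ := (S x).exists_min_image id (Set.toFinite _) hS
      exact ⟨.inr ⟨i, x, hx, hi, hmin⟩, rfl⟩

section Perm

variable {n : ℕ} {σ : Perm (Fin n)} {i j : Fin n}

namespace IsStrongFixedPoint

theorem apply_lt_apply_iff (h : IsStrongFixedPoint σ i) : σ j < σ i ↔ j < i := by
  refine ⟨fun hj ↦ ?_, h.1 j⟩
  by_contra! hij
  rcases hij.eq_or_lt with rfl | hij
  · exact hj.false
  · exact hj.asymm (h.2 j hij)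

theorem apply_eq (h : IsStrongFixedPoint σ i) : σ i = i := by
  have map_Iio : (Finset.Iio i).map σ.toEmbedding = Finset.Iio (σ i) := by
    ext x
    obtain ⟨j, rfl⟩ := σ.surjective x
    simp [h.apply_lt_apply_iff]
  simpa [Fin.ext_iff, eq_comm] using congrArg Finset.card map_Iio

end IsStrongFixedPoint

theorem isKing_iff : IsKing σ ↔
    ∀ i j : Fin n, (i : ℕ) + 1 = j → 1 < |((σ j : ℕ) : ℤ) - ((σ i : ℕ) : ℤ)| := by
  refine ⟨fun h i ⟨j, hj⟩ hij ↦ ?_, fun h i hi ↦ h i _ rfl⟩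
  obtain rfl : (i : ℕ) + 1 = j := hij
  exact h i hj

theorem isKing_of_subsingleton [Subsingleton (Fin n)] (σ : Perm (Fin n)) : IsKing σ :=
  isKing_iff.2 fun i j hij ↦ by
    obtain rfl := Subsingleton.elim i j
    omega

/-- The word of `σ` is nonempty and its first letter is its minimum. -/
def StartsWithMin (σ : Perm (Fin n)) : Prop :=
  ∃ i : Fin n, (i : ℕ) = 0 ∧ (σ i : ℕ) = 0

/-- The word of `σ` is nonempty and its last letter is its maximum. -/
def EndsWithMax (σ : Perm (Fin n)) : Prop :=
  ∃ i : Fin n, (i : ℕ) + 1 = n ∧ (σ i : ℕ) + 1 = n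

theorem EndsWithMax.exists_isStrongFixedPoint (h : EndsWithMax σ) :
    ∃ i, IsStrongFixedPoint σ i := by
  obtain ⟨i, hi, hσi⟩ := h
  refine ⟨i, fun j hj ↦ lt_of_le_of_ne ?_ (σ.injective.ne hj.ne), fun j hj ↦ ?_⟩ <;> omega

theorem startsWithMin_iff_isLeast_zero {σ : Perm (Fin (n + 1))} :
    StartsWithMin σ ↔ IsLeast {i | IsStrongFixedPoint σ i} 0 := by
  constructor
  · rintro ⟨i, hi, hσi⟩
    obtain rfl : i = 0 := Fin.ext hi
    have hσ : σ 0 = 0 := Fin.ext hσi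
    refine ⟨⟨fun j hj ↦ absurd hj j.not_lt_zero, fun j hj ↦ ?_⟩, fun j _ ↦ j.zero_le⟩
    rw [hσ, Fin.pos_iff_ne_zero, ← hσ]
    exact σ.injective.ne hj.ne'
  · intro h
    exact ⟨0, rfl, congrArg Fin.val h.1.apply_eq⟩

end Perm

/-- The direct sum of permutations: the word of `α` followed by the word of `β` shifted up by
`a`. -/
def directSum {a b : ℕ} (α : Perm (Fin a)) (β : Perm (Fin b)) : Perm (Fin (a + b)) :=
  finSumFinEquiv.permCongr (Equiv.Perm.sumCongr α β)

section DirectSum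

variable {a b : ℕ} {α α' : Perm (Fin a)} {β β' : Perm (Fin b)}

@[simp]
theorem directSum_castAdd (α : Perm (Fin a)) (β : Perm (Fin b)) (i : Fin a) :
    directSum α β (Fin.castAdd b i) = Fin.castAdd b (α i) := by
  simp [directSum]

@[simp]
theorem directSum_natAdd (α : Perm (Fin a)) (β : Perm (Fin b)) (i : Fin b) :
    directSum α β (Fin.natAdd a i) = Fin.natAdd a (β i) := by
  simp [directSum]

theorem directSum_inj : directSum α β = directSum α' β' ↔ α = α' ∧ β = β' := by
  simp [Equiv.ext_iff, Fin.forall_fin_add]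

theorem exists_directSum_eq {σ : Perm (Fin (a + b))}
    (h : ∀ i : Fin a, (σ (Fin.castAdd b i) : ℕ) < a) :
    ∃ (α : Perm (Fin a)) (β : Perm (Fin b)), directSum α β = σ := by
  have mapsTo_inl : Set.MapsTo (finSumFinEquiv.symm.permCongr σ)
      (Set.range (Sum.inl : Fin a → Fin a ⊕ Fin b)) (Set.range Sum.inl) := by
    rintro _ ⟨i, rfl⟩
    exact ⟨⟨_, h i⟩, by simp [Equiv.eq_symm_apply]⟩
  obtain ⟨⟨α, β⟩, hαβ⟩ := Equiv.Perm.mem_sumCongrHom_range_of_perm_mapsTo_inl mapsTo_inl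
  exact ⟨α, β, (Equiv.eq_symm_apply _).1 hαβ⟩

theorem castAdd_lt_natAdd (i : Fin a) (j : Fin b) : Fin.castAdd b i < Fin.natAdd a j :=
  i.2.trans_le (Nat.le_add_right a j)

theorem isStrongFixedPoint_directSum_castAdd {i : Fin a} :
    IsStrongFixedPoint (directSum α β) (Fin.castAdd b i) ↔ IsStrongFixedPoint α i := by
  simp [IsStrongFixedPoint, Fin.forall_fin_add, castAdd_lt_natAdd, (castAdd_lt_natAdd _ _).not_gt,
    (Fin.strictMono_castAdd b).lt_iff_lt]

theorem isStrongFixedPoint_directSum_natAdd {i : Fin b} :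
    IsStrongFixedPoint (directSum α β) (Fin.natAdd a i) ↔ IsStrongFixedPoint β i := by
  simp [IsStrongFixedPoint, Fin.forall_fin_add, castAdd_lt_natAdd, (castAdd_lt_natAdd _ _).not_gt]

theorem isKing_directSum : IsKing (directSum α β) ↔
    IsKing α ∧ IsKing β ∧ ¬ (EndsWithMax α ∧ StartsWithMin β) := by
  have junction : (∀ (i : Fin a) (j : Fin b), (i : ℕ) + 1 = a + j →
      1 < |(a : ℤ) + (β j : ℕ) - (α i : ℕ)|) ↔ ¬ (EndsWithMax α ∧ StartsWithMin β) := by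
    simp only [lt_abs]
    constructor
    · rintro h ⟨⟨i, hi, hαi⟩, ⟨j, hj, hβj⟩⟩
      have := h i j (by omega)
      omega
    · intro h i j hij
      by_contra hle
      exact h ⟨⟨i, by omega, by omega⟩, ⟨j, by omega, by omega⟩⟩
  have not_succ (j : Fin b) (i : Fin a) : a + ((j : ℕ) + 1) ≠ i := by omega
  simp only [isKing_iff, Fin.forall_fin_add, directSum_castAdd, directSum_natAdd,
    Fin.val_castAdd, Fin.val_natAdd, add_assoc, Nat.add_left_cancel_iff, Nat.cast_add,
    add_sub_add_left_eq_sub, not_succ, false_imp_iff, forall_and, ← junction]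
  tauto

theorem endsWithMax_directSum_one : EndsWithMax (directSum α (1 : Perm (Fin 1))) :=
  ⟨Fin.natAdd a 0, by simp⟩

theorem startsWithMin_one : StartsWithMin (1 : Perm (Fin 1)) :=
  ⟨0, by simp⟩

theorem isKing_directSum_one_directSum :
    IsKing (directSum (directSum α (1 : Perm (Fin 1))) β) ↔
      (IsKing α ∧ ¬ EndsWithMax α) ∧ IsKing β ∧ ¬ StartsWithMin β := by
  simp [isKing_directSum, isKing_of_subsingleton, startsWithMin_one, endsWithMax_directSum_one]

theorem isLeast_directSum_one_directSum :
    IsLeast {i | IsStrongFixedPoint (directSum (directSum α (1 : Perm (Fin 1))) β) i}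
      (Fin.castAdd b (Fin.last a)) ↔ ∀ i, ¬ IsStrongFixedPoint α i := by
  have isStrongFixedPoint_last :
      IsStrongFixedPoint (directSum α (1 : Perm (Fin 1))) (Fin.last a) := by
    refine (isStrongFixedPoint_directSum_natAdd (i := 0)).2 ?_
    simp [IsStrongFixedPoint]
  constructor
  · intro hleast i hi
    have hle : Fin.castAdd b (Fin.last a) ≤ Fin.castAdd b (Fin.castAdd 1 i) :=
      hleast.2 (isStrongFixedPoint_directSum_castAdd.2 (isStrongFixedPoint_directSum_castAdd.2 hi))
    exact hle.not_gt i.2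
  · refine fun hα ↦ ⟨isStrongFixedPoint_directSum_castAdd.2 isStrongFixedPoint_last, fun i hi ↦ ?_⟩
    by_contra! hlt
    obtain ⟨k, rfl⟩ : ∃ k : Fin a, Fin.castAdd b (Fin.castAdd 1 k) = i := ⟨⟨i, hlt⟩, rfl⟩
    exact hα k (isStrongFixedPoint_directSum_castAdd.1 (isStrongFixedPoint_directSum_castAdd.1 hi))

theorem IsStrongFixedPoint.exists_directSum_one_directSum_eq {σ : Perm (Fin (a + 1 + b))}
    (h : IsStrongFixedPoint σ (Fin.castAdd b (Fin.last a))) :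
    ∃ (α : Perm (Fin a)) (β : Perm (Fin b)),
      directSum (directSum α (1 : Perm (Fin 1))) β = σ := by
  have apply_lt {j : Fin (a + 1 + b)} (hj : (j : ℕ) < a) : (σ j : ℕ) < a := by
    simpa [h.apply_eq, Fin.lt_def] using h.1 j hj
  obtain ⟨γ, β, rfl⟩ : ∃ (γ : Perm (Fin (a + 1))) (β : Perm (Fin b)), directSum γ β = σ := by
    refine exists_directSum_eq fun i ↦ ?_
    cases i using Fin.lastCases with
    | last => simp [h.apply_eq]
    | cast i => exact (apply_lt i.2).trans a.lt_succ_self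
  obtain ⟨α, ε, rfl⟩ : ∃ (α : Perm (Fin a)) (ε : Perm (Fin 1)), directSum α ε = γ :=
    exists_directSum_eq fun i ↦ by simpa using apply_lt (j := Fin.castAdd b (Fin.castAdd 1 i)) i.2
  exact ⟨α, β, by rw [Subsingleton.elim ε 1]⟩

end DirectSum

/-- `Bcount n` is the number of king permutations of length `n` not starting with their minimum. -/
noncomputable def Bcount (n : ℕ) : ℕ :=
  Nat.card {σ : Perm (Fin n) // IsKing σ ∧ ¬ StartsWithMin σ}

/-- `B(t) = Σ_{n≥0} B_n t^n` as a formal power series over `ℚ`, where `B_n = Bcount n`. -/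
noncomputable def kingB : PowerSeries ℚ :=
  PowerSeries.mk fun n ↦ (Bcount n : ℚ)

theorem card_king_isLeast_castAdd_last (a b : ℕ) :
    Nat.card {σ : Perm (Fin (a + 1 + b)) // IsKing σ ∧
      IsLeast {i | IsStrongFixedPoint σ i} (Fin.castAdd b (Fin.last a))} =
      Pcount a * Bcount b := by
  rw [Pcount, Bcount, ← Nat.card_prod]
  symm
  refine Nat.card_congr (Equiv.ofBijective
    (fun p ↦ ⟨directSum (directSum p.1.1 1) p.2.1, isKing_directSum_one_directSum.2
      ⟨⟨p.1.2.1, fun h ↦ h.exists_isStrongFixedPoint.elim p.1.2.2⟩, p.2.2⟩,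
      isLeast_directSum_one_directSum.2 p.1.2.2⟩) ⟨?_, ?_⟩)
  · intro p q hpq
    have hinj := directSum_inj.1 (congrArg Subtype.val hpq)
    exact Prod.ext (Subtype.ext (directSum_inj.1 hinj.1).1) (Subtype.ext hinj.2)
  · rintro ⟨σ, hking, hleast⟩
    obtain ⟨α, β, rfl⟩ := hleast.1.exists_directSum_one_directSum_eq
    obtain ⟨⟨hα, -⟩, hβ⟩ := isKing_directSum_one_directSum.1 hking
    exact ⟨⟨⟨α, hα, isLeast_directSum_one_directSum.1 hleast⟩, ⟨β, hβ⟩⟩, rfl⟩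

theorem card_king_isLeast {n : ℕ} (i : Fin n) :
    Nat.card {σ : Perm (Fin n) // IsKing σ ∧ IsLeast {i | IsStrongFixedPoint σ i} i} =
      Pcount i * Bcount (n - 1 - i) := by
  obtain ⟨b, hn⟩ : ∃ b, n = i + 1 + b := Nat.exists_eq_add_of_le i.2
  generalize ha : (i : ℕ) = a at hn ⊢
  subst hn
  obtain rfl : i = Fin.castAdd b (Fin.last a) := Fin.ext ha
  rw [card_king_isLeast_castAdd_last, show a + 1 + b - 1 - a = b by omega]

theorem kingCount_eq_pcount_add_sum (n : ℕ) :
    kingCount n = Pcount n + ∑ i : Fin n, Pcount i * Bcount (n - 1 - i) := by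
  simpa only [kingCount, Pcount, card_king_isLeast, Set.eq_empty_iff_forall_notMem,
    Set.mem_ofPred_eq] using card_subtype_eq_card_empty_add_sum_card_isLeast
      (IsKing (n := n)) fun σ ↦ {i | IsStrongFixedPoint σ i}

theorem pcount_zero : Pcount 0 = 1 := by
  rw [Pcount, Nat.card_eq_one_iff_unique]
  exact ⟨inferInstance, ⟨1, isKing_of_subsingleton 1, fun i ↦ i.elim0⟩⟩

theorem kingCount_zero : kingCount 0 = Bcount 0 := by
  simp [kingCount, Bcount, StartsWithMin]

theorem kingCount_succ (n : ℕ) : kingCount (n + 1) = Bcount n + Bcount (n + 1) := by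
  have card_startsWithMin :
      Nat.card {σ : Perm (Fin (n + 1)) // IsKing σ ∧ StartsWithMin σ} = Bcount n := by
    simp [startsWithMin_iff_isLeast_zero, card_king_isLeast, pcount_zero]
  rw [← card_startsWithMin]
  exact (Set.ncard_inter_add_ncard_sdiff_eq_ncard {σ : Perm (Fin (n + 1)) | IsKing σ}
    {σ | StartsWithMin σ}).symm

theorem kingA_eq_mul_kingB : kingA = (1 + PowerSeries.X) * kingB := by
  ext n
  cases n with
  | zero => simp [kingA, kingB, add_mul, kingCount_zero]
  | succ n => simp [kingA, kingB, add_mul, PowerSeries.coeff_succ_X_mul, kingCount_succ, add_comm]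

theorem kingA_eq_kingP_add : kingA = kingP + PowerSeries.X * (kingP * kingB) := by
  ext n
  cases n with
  | zero => simp [kingA, kingP, kingCount_eq_pcount_add_sum]
  | succ n =>
    rw [map_add, PowerSeries.coeff_succ_X_mul, PowerSeries.coeff_mul,
      Finset.Nat.sum_antidiagonal_eq_sum_range_succ_mk, Finset.sum_range]
    simp [kingA, kingP, kingB, kingCount_eq_pcount_add_sum]

theorem statement_3 :
    (1 + PowerSeries.X + PowerSeries.X * kingA) * kingP
      = (1 + PowerSeries.X) * kingA := by
  calc (1 + PowerSeries.X + PowerSeries.X * kingA) * kingP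
      = (1 + PowerSeries.X) * (kingP + PowerSeries.X * (kingP * kingB)) := by
        rw [kingA_eq_mul_kingB]; ring
    _ = (1 + PowerSeries.X) * kingA := by rw [← kingA_eq_kingP_add]
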